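/- Let (Γ,·) be a non-trivial finite group and let (D,γ) be a Γ-labelled complete digraph on exactly |Γ| vertices which contains no balanced directed cycle. Then there exist a non-empty subset X of V(D) and a vertex x ∈ X such that |R_{D,γ}(X,x)| ≥ |X| and the right stabilizer stab_r(R_{D,γ}(X,x)) is a non-trivial subgroup of Γ. -/

import Mathlib

/-!
The theorem holds because, as long as no set `R(X, x)` with at least `|X|` elements has a non-trivial
right stabilizer, *every* non-empty `X` contains some `x` with `|R(X, x)| ≥ |X|`
(`exists_good_vertex`). For `X = V` this gives `R(V, x) = Γ`, which is stabilized by all of `Γ`.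

The claim is proved by induction on `|X|`. Let `|Z| = n + 1` and suppose `|R(Z, z)| ≤ n` for all
`z ∈ Z`. By induction each `Z \ {z}` contains a vertex `f z` with `|R(Z \ {z}, f z)| ≥ n`. Both
`R(Z \ {z}, f z) ⊆ R(Z, f z)` and `R(Z \ {z}, f z) · γ(f z, z) ⊆ R(Z, z)` are then equalities by
cardinality, so `R(Z, z) = R(Z, f z) · γ(f z, z)`. The map `f` has no fixed point but has a periodic
one, and going backwards along its orbit gives a directed cycle whose label product stabilizes
`R(Z, w)` for a vertex `w` of the orbit. That product is not `1` because no cycle is balanced, and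
`R(Z, w) = R(Z \ {z}, w)` with `f z = w` has at least `n = |Z \ {z}|` elements: a contradiction.
-/

/-- The cumulative product of the arc-labels of the directed cycle
`c = [v₀, v₁, …, v_{ℓ-1}]` (with closing arc `(v_{ℓ-1}, v₀)`). -/
def cycleProd {V Γ : Type} [Monoid Γ] (γ : V → V → Γ) (c : List V) : Γ :=
  ((c.zip (c.rotate 1)).map fun e => γ e.1 e.2).prod

/-- `c` is a directed cycle of the complete digraph (a list of at least two
pairwise distinct vertices) which is balanced with respect to `γ`. -/
def IsBalancedCycle {V Γ : Type} [Monoid Γ] (γ : V → V → Γ) (c : List V) : Prop :=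
  2 ≤ c.length ∧ c.Nodup ∧ cycleProd γ c = 1

/-- The cumulative product of the arc-labels along the directed path given by the
list of vertices `p` (a single-vertex path has value `1`). -/
def pathProd {V Γ : Type} [Monoid Γ] (γ : V → V → Γ) (p : List V) : Γ :=
  ((p.zip p.tail).map fun e => γ e.1 e.2).prod

/-- `R_{D,γ}(X, x)`: the set of `γ`-values of directed paths inside `X`
ending at `x` (including the single-vertex path at `x`). -/
def pathEndVals {V Γ : Type} [Monoid Γ] (γ : V → V → Γ) (X : Set V) (x : V) : Set Γ :=
  {g | ∃ p : List V, p ≠ [] ∧ p.Nodup ∧ (∀ w ∈ p, w ∈ X) ∧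
        p.getLast? = some x ∧ pathProd γ p = g}

/-- The right stabilizer `stab_r(S) = {g : S·g = S}` of a subset `S` of a group. -/
def stabr {Γ : Type} [Group Γ] (S : Set Γ) : Set Γ :=
  {g | (fun s => s * g) '' S = S}

/-! ### Products along paths and cycles -/

section PathProducts

variable {V Γ : Type} [Monoid Γ] (γ : V → V → Γ)

lemma pathProd_singleton (a : V) : pathProd γ [a] = 1 := by
  simp [pathProd]

lemma pathProd_cons_cons (a b : V) (l : List V) :
    pathProd γ (a :: b :: l) = γ a b * pathProd γ (b :: l) := by
  simp [pathProd]

lemma pathProd_concat (p : List V) (x y : V) (hp : p.getLast? = some x) :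
    pathProd γ (p ++ [y]) = pathProd γ p * γ x y := by
  induction p with
  | nil => simp at hp
  | cons a l ih =>
    cases l with
    | nil =>
      obtain rfl : a = x := by simpa using hp
      simp [pathProd]
    | cons b l =>
      have h := ih (by simpa using hp)
      simp only [List.cons_append] at h ⊢
      rw [pathProd_cons_cons, h, pathProd_cons_cons, mul_assoc]

lemma cycleProd_cons (a : V) (l : List V) (x : V) (hx : (a :: l).getLast? = some x) :
    cycleProd γ (a :: l) = pathProd γ (a :: l) * γ x a := by
  rw [← pathProd_concat γ _ x a hx]
  -- `zip` truncates, so the extra last vertex of `a :: l ++ [a]` does not matter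
  have h : ∀ (s t : List V) (b : V), s.length = t.length → (s ++ [b]).zip t = s.zip t := by
    intro s
    induction s with
    | nil => intro t b h; obtain rfl : t = [] := by simpa using h.symm
             simp
    | cons c s ih =>
      intro t b h
      cases t with
      | nil => simp at h
      | cons d t => simp [ih t b (by simpa using h)]
  have h' := h (a :: l) (l ++ [a]) a (by simp)
  simp only [cycleProd, pathProd, List.rotate_cons_succ, List.rotate_zero, List.cons_append,
    List.tail_cons] at h' ⊢
  rw [h']

lemma pathEndVals_mono {X Y : Set V} (h : X ⊆ Y) (x : V) :
    pathEndVals γ X x ⊆ pathEndVals γ Y x := by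
  rintro g ⟨p, h1, h2, h3, h4, h5⟩
  exact ⟨p, h1, h2, fun w hw => h (h3 w hw), h4, h5⟩

lemma one_mem_pathEndVals {X : Set V} {x : V} (hx : x ∈ X) : 1 ∈ pathEndVals γ X x :=
  ⟨[x], by simp, by simp, by simpa using hx, by simp, pathProd_singleton γ x⟩

/-- A path inside `Z \ {z}` ending at `x` extends by the arc `(x, z)` to a path inside `Z`. -/
lemma image_mul_pathEndVals_subset {Z : Set V} {z : V} (hz : z ∈ Z) (x : V) :
    (fun s => s * γ x z) '' pathEndVals γ (Z \ {z}) x ⊆ pathEndVals γ Z z := by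
  rintro _ ⟨_, ⟨p, h1, h2, h3, h4, rfl⟩, rfl⟩
  refine ⟨p ++ [z], by simp, ?_, ?_, by simp, pathProd_concat γ p x z h4⟩
  · rw [List.nodup_append]
    refine ⟨h2, by simp, ?_⟩
    rintro a ha b hb rfl
    exact (h3 a ha).2 (by simpa using hb)
  · intro w hw
    rcases List.mem_append.1 hw with hw | hw
    · exact (h3 w hw).1
    · rw [List.mem_singleton.1 hw]; exact hz

end PathProducts

/-! ### Orbits traversed backwards -/

section BackwardOrbit

variable {V : Type} (f : V → V) (w : V)

/-- The list `[f^m w, …, f w, w]`: the orbit of `w` under `f`, traversed backwards. -/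
def backOrbit : ℕ → List V
  | 0 => [w]
  | m + 1 => f^[m + 1] w :: backOrbit m

lemma backOrbit_eq_cons (m : ℕ) : ∃ l, backOrbit f w m = f^[m] w :: l := by
  cases m with
  | zero => exact ⟨[], rfl⟩
  | succ m => exact ⟨_, rfl⟩

lemma length_backOrbit (m : ℕ) : (backOrbit f w m).length = m + 1 := by
  induction m with
  | zero => rfl
  | succ m ih => simp [backOrbit, ih]

lemma getLast_backOrbit (m : ℕ) : (backOrbit f w m).getLast? = some w := by
  induction m with
  | zero => rfl
  | succ m ih => simp [backOrbit, List.getLast?_cons, ih]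

lemma mem_backOrbit {m : ℕ} {v : V} (hv : v ∈ backOrbit f w m) : ∃ i ≤ m, v = f^[i] w := by
  induction m with
  | zero => exact ⟨0, le_rfl, by simpa [backOrbit] using hv⟩
  | succ m ih =>
    rcases List.mem_cons.1 hv with h | h
    · exact ⟨m + 1, le_rfl, h⟩
    · obtain ⟨i, hi, h⟩ := ih h
      exact ⟨i, by omega, h⟩

lemma nodup_backOrbit {m : ℕ} (hm : m < Function.minimalPeriod f w) :
    (backOrbit f w m).Nodup := by
  induction m with
  | zero => simp [backOrbit]
  | succ m ih =>
    refine List.nodup_cons.2 ⟨fun h => ?_, ih (by omega)⟩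
    obtain ⟨i, hi, h⟩ := mem_backOrbit f w h
    have := Function.iterate_injOn_Iio_minimalPeriod (f := f) (x := w)
      (Set.mem_Iio.2 hm) (Set.mem_Iio.2 (by omega : i < _)) h
    omega

/-- If `S z = S (f z) · γ(f z, z)` along the orbit, these translations compose along the
backward orbit. -/
lemma eq_image_pathProd_backOrbit {Γ : Type} [Monoid Γ] (γ : V → V → Γ) (S : V → Set Γ)
    (hS : ∀ i, S (f^[i] w) = (fun s => s * γ (f^[i + 1] w) (f^[i] w)) '' S (f^[i + 1] w))
    (m : ℕ) : S w = (fun s => s * pathProd γ (backOrbit f w m)) '' S (f^[m] w) := by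
  induction m with
  | zero => simp [backOrbit, pathProd_singleton]
  | succ m ih =>
    obtain ⟨l, hl⟩ := backOrbit_eq_cons f w m
    rw [ih, hS m, Set.image_image, backOrbit, hl, pathProd_cons_cons]
    simp only [mul_assoc]

end BackwardOrbit

/-! ### The stabilizer argument -/

/-- If no pair `(X, x)` with `|R(X, x)| ≥ |X|` has a non-trivial right stabilizer, then every
non-empty `X` contains an `x` with `|R(X, x)| ≥ |X|`. -/
lemma exists_good_vertex {Γ V : Type} [Group Γ] [Finite Γ] [Finite V]
    (γ : V → V → Γ) (hbal : ¬ ∃ c : List V, IsBalancedCycle γ c)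
    (hstab : ∀ (X : Set V) (x : V), x ∈ X → X.ncard ≤ (pathEndVals γ X x).ncard →
      ∀ g ∈ stabr (pathEndVals γ X x), g = 1)
    (n : ℕ) : ∀ Z : Set V, Z.ncard = n + 1 → ∃ x ∈ Z, n + 1 ≤ (pathEndVals γ Z x).ncard := by
  induction n with
  | zero =>
    intro Z hZ
    obtain ⟨x, hx⟩ := Set.nonempty_of_ncard_ne_zero (by omega : Z.ncard ≠ 0)
    refine ⟨x, hx, ?_⟩
    exact (Set.ncard_pos (Set.toFinite _)).2 ⟨1, one_mem_pathEndVals γ hx⟩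
  | succ n ih =>
    intro Z hZ
    by_contra! hbad
    have hcard : ∀ z ∈ Z, (Z \ {z}).ncard = n + 1 := fun z hz => by
      rw [Set.ncard_sdiff_singleton_of_mem hz, hZ]; rfl
    choose! f hfmem hfcard using fun z hz => ih (Z \ {z}) (hcard z hz)
    have hfZ : ∀ z ∈ Z, f z ∈ Z := fun z hz => (hfmem z hz).1
    have hfne : ∀ z ∈ Z, f z ≠ z := fun z hz => (hfmem z hz).2
    have heq : ∀ z ∈ Z, pathEndVals γ (Z \ {z}) (f z) = pathEndVals γ Z (f z) := by
      intro z hz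
      refine Set.eq_of_subset_of_ncard_le (pathEndVals_mono γ Set.sdiff_subset _) ?_
      have := hbad _ (hfZ z hz)
      have := hfcard z hz
      omega
    have hstep : ∀ z ∈ Z, pathEndVals γ Z z =
        (fun s => s * γ (f z) z) '' pathEndVals γ Z (f z) := by
      intro z hz
      rw [← heq z hz]
      symm
      refine Set.eq_of_subset_of_ncard_le (image_mul_pathEndVals_subset γ hz _) ?_
      rw [Set.ncard_image_of_injective _ (mul_left_injective _)]
      have := hbad z hz
      have := hfcard z hz
      omega
    have hiter : ∀ z ∈ Z, ∀ i, f^[i] z ∈ Z := by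
      intro z hz i
      induction i with
      | zero => exact hz
      | succ i ih => rw [Function.iterate_succ_apply']; exact hfZ _ ih
    -- pigeonhole on an orbit yields a periodic point
    obtain ⟨w, hw, hper⟩ : ∃ w ∈ Z, w ∈ Function.periodicPts f := by
      obtain ⟨z, hz⟩ := Set.nonempty_of_ncard_ne_zero (by omega : Z.ncard ≠ 0)
      obtain ⟨i, j, hne, hij⟩ := Finite.exists_ne_map_eq_of_infinite (fun i : ℕ => f^[i] z)
      wlog hlt : i < j generalizing i j
      · exact this j i hne.symm hij.symm (by omega)
      refine ⟨f^[i] z, hiter z hz i, Function.mk_mem_periodicPts (n := j - i) (by omega) ?_⟩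
      change f^[j - i] (f^[i] z) = f^[i] z
      rw [← Function.iterate_add_apply, Nat.sub_add_cancel hlt.le]
      exact hij.symm
    have hpos := Function.minimalPeriod_pos_of_mem_periodicPts hper
    have hne1 : Function.minimalPeriod f w ≠ 1 := fun h =>
      hfne w hw (Function.minimalPeriod_eq_one_iff_isFixedPt.1 h)
    obtain ⟨m, hm⟩ : ∃ m, Function.minimalPeriod f w = m + 1 :=
      ⟨_, (Nat.sub_add_cancel hpos).symm⟩
    have hclose : f (f^[m] w) = w := by
      rw [← Function.iterate_succ_apply' f m w, Nat.succ_eq_add_one, ← hm]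
      exact Function.iterate_minimalPeriod
    have ha := hiter w hw m
    obtain ⟨l, hl⟩ := backOrbit_eq_cons f w m
    have hcyc : cycleProd γ (backOrbit f w m) =
        pathProd γ (backOrbit f w m) * γ w (f^[m] w) := by
      rw [hl]
      exact cycleProd_cons γ _ l w (hl ▸ getLast_backOrbit f w m)
    have h1 := eq_image_pathProd_backOrbit f w γ (pathEndVals γ Z)
      (fun i => by
        rw [Function.iterate_succ_apply']
        exact hstep _ (hiter w hw i)) m
    have h2 := hstep _ ha
    rw [hclose] at h2
    have hmem : cycleProd γ (backOrbit f w m) ∈ stabr (pathEndVals γ Z (f^[m] w)) := by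
      change _ '' _ = _
      conv_rhs => rw [h2, h1, Set.image_image]
      simp only [hcyc, mul_assoc]
    -- the pair contradicting `hstab` is `f^[m] w` in `Z` minus its predecessor `f^[m - 1] w`
    obtain ⟨k, hk⟩ : ∃ k, m = k + 1 := ⟨m - 1, by omega⟩
    have hb := hiter w hw k
    have hfb : f (f^[k] w) = f^[m] w := by rw [hk, Function.iterate_succ_apply']
    have h3 := heq _ hb
    have h4 := hfcard _ hb
    have h5 := hfmem _ hb
    rw [hfb] at h3 h4 h5
    refine hbal ⟨backOrbit f w m, ?_, nodup_backOrbit f w (by omega), ?_⟩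
    · rw [length_backOrbit]; omega
    · exact hstab _ _ h5 (by rw [hcard _ hb]; exact h4) _ (h3 ▸ hmem)

/-- key lemma. Let `Γ` be a non-trivial finite group and `(D, γ)` a
`Γ`-labelled complete digraph on exactly `|Γ|` vertices with no balanced cycle. Then
there are a non-empty `X ⊆ V(D)` and `x ∈ X` with `|R_{D,γ}(X,x)| ≥ |X|` such that
`R_{D,γ}(X,x)` has a non-trivial right stabilizer. -/
theorem key_lemma_nontrivial_stabilizer {Γ V : Type} [Group Γ] [Fintype Γ]
    [Fintype V] [DecidableEq V]
    (hΓ : 1 < Fintype.card Γ)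
    (hV : Fintype.card V = Fintype.card Γ)
    (γ : V → V → Γ)
    (hbal : ¬ ∃ c : List V, IsBalancedCycle γ c) :
    ∃ (X : Set V) (x : V), X.Nonempty ∧ x ∈ X ∧
      X.ncard ≤ (pathEndVals γ X x).ncard ∧
      ∃ g ∈ stabr (pathEndVals γ X x), g ≠ 1 := by
  by_contra hcon
  have hstab : ∀ (X : Set V) (x : V), x ∈ X → X.ncard ≤ (pathEndVals γ X x).ncard →
      ∀ g ∈ stabr (pathEndVals γ X x), g = 1 := by
    intro X x hx hX g hg
    by_contra hne
    exact hcon ⟨X, x, ⟨x, hx⟩, hx, hX, g, hg, hne⟩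
  have hcardV : (Set.univ : Set V).ncard = Fintype.card Γ - 1 + 1 := by
    rw [Set.ncard_univ, Nat.card_eq_fintype_card]; omega
  obtain ⟨x, hx, hR⟩ := exists_good_vertex γ hbal hstab _ _ hcardV
  have huniv : pathEndVals γ Set.univ x = Set.univ := by
    refine Set.eq_of_subset_of_ncard_le (Set.subset_univ _) ?_
    rw [Set.ncard_univ, Nat.card_eq_fintype_card]; omega
  obtain ⟨g, hg⟩ := Fintype.exists_ne_of_one_lt_card hΓ (1 : Γ)
  refine hg (hstab _ x hx (by omega) g ?_)
  rw [huniv]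
  exact Set.image_univ_of_surjective (mul_right_surjective g)
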